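/- (Pseudolabel correction via bad-to-good expansion, average-case-robust generalization of Wei et al.'s bound.) Fix a label i, η ≥ 0, q ≥ 0 and c > α_i/(1 − α_i). Suppose M_η(S_i^bad, F) satisfies (c,q,η)-robust expansion on (S_i^good, S_i^bad). Let c̃ = c·(1 − α_i)/α_i and suppose f ∈ F satisfies P({x : f(x) ≠ ỹ(x) or x ∉ R_η(f)} | S_i) ≤ α_i·(1 + q·(c̃ − 1)). Then err(f, y | S_i) ≤ 2·( q·α_i + P(X \ R_η(f) | S_i) ) + err(f, ỹ | S_i) − α_i. -/

import Mathlib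

open Finset
open scoped Classical

noncomputable section

variable {X Y : Type*} [Fintype X] [DecidableEq X] [DecidableEq Y]

/-- Probability of a finite set of points under the weight function `μ`. -/
def Pw (μ : X → ℝ) (A : Finset X) : ℝ := ∑ x ∈ A, μ x

/-- Conditional probability `P(A | B) = P(A ∩ B) / P(B)`. -/
def cPw (μ : X → ℝ) (A B : Finset X) : ℝ := Pw μ (A ∩ B) / Pw μ B

/-- `err(f, g | U) = P({x : f x ≠ g x} | U)`. -/
def errP {Z : Type*} (μ : X → ℝ) (f g : X → Z) (U : Finset X) : ℝ :=
  cPw μ (univ.filter fun x => f x ≠ g x) U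

/-- Neighborhood of a set: `N(A) = ⋃_{x ∈ A} N(x)`. -/
def nbhd (N : X → Finset X) (A : Finset X) : Finset X := A.biUnion N

/-- `r(f, x) = P({x' : f x' ≠ f x} | N(x))`. -/
def rob (μ : X → ℝ) (N : X → Finset X) (f : X → Y) (x : X) : ℝ :=
  cPw μ (univ.filter fun x' => f x' ≠ f x) (N x)

/-- `R_η(f) = {x : r(f,x) ≤ η}`, the set of η-robust points of `f`. -/
def Rset (μ : X → ℝ) (N : X → Finset X) (η : ℝ) (f : X → Y) : Finset X :=
  univ.filter fun x => rob μ N f x ≤ η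

/-- Edge weight `w(x, x') = P({x})·P({x'})·1[x ∈ N(x')]`. -/
def wE (μ : X → ℝ) (N : X → Finset X) (x x' : X) : ℝ :=
  μ x * μ x' * (if x ∈ N x' then 1 else 0)

/-- `w(V, U) = Σ_{x ∈ V, x' ∈ U} w(x, x')`. -/
def wS (μ : X → ℝ) (N : X → Finset X) (V U : Finset X) : ℝ :=
  ∑ x ∈ V, ∑ x' ∈ U, wE μ N x x'

/-- `P_{1-η}(U, A)`: the η-robust neighborhood size of `U` in `A`. -/
def robNbhdSize (μ : X → ℝ) (N : X → Finset X) (η : ℝ) (U A : Finset X) : ℝ :=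
  sInf {p : ℝ | ∃ V : Finset X,
    (1 - η) * wS μ N (nbhd N U) U ≤ wS μ N V U ∧ p = cPw μ V A}

/-- `M` satisfies `(c, q, η)`-robust expansion on `(A, B)`. -/
def RobustExpansion (μ : X → ℝ) (N : X → Finset X) (c q η : ℝ)
    (M : Set (Finset X)) (A B : Finset X) : Prop :=
  ∀ U ∈ M, cPw μ U B > q → robNbhdSize μ N η U A > c * cPw μ U B

/-- `M` satisfies `(c, q)`-expansion on `(A, B)` (the `η = 0` case). -/
def Expansion (μ : X → ℝ) (N : X → Finset X) (c q : ℝ)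
    (M : Set (Finset X)) (A B : Finset X) : Prop :=
  ∀ U ∈ M, cPw μ U B > q → cPw μ (nbhd N U) A > c * cPw μ U B

/-- Covered set `S = {x : ỹ x ≠ ∅}`. -/
def Scov (yt : X → Option Y) : Finset X := univ.filter fun x => yt x ≠ none

/-- `S_i = S ∩ X_i`. -/
def SiSet (y : X → Y) (yt : X → Option Y) (i : Y) : Finset X :=
  univ.filter fun x => yt x ≠ none ∧ y x = i

/-- `T_i = T ∩ X_i`. -/
def TiSet (y : X → Y) (yt : X → Option Y) (i : Y) : Finset X :=
  univ.filter fun x => yt x = none ∧ y x = i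

/-- `S_i^good = {x ∈ S_i : ỹ x = y x}`. -/
def SiGood (y : X → Y) (yt : X → Option Y) (i : Y) : Finset X :=
  univ.filter fun x => yt x = some (y x) ∧ y x = i

/-- `S_i^bad = S_i \ S_i^good`. -/
def SiBad (y : X → Y) (yt : X → Option Y) (i : Y) : Finset X :=
  SiSet y yt i \ SiGood y yt i

/-- `α_i = P(S_i^bad | S_i)`. -/
def alphaW (μ : X → ℝ) (y : X → Y) (yt : X → Option Y) (i : Y) : ℝ :=
  cPw μ (SiBad y yt i) (SiSet y yt i)

/-- `M_η(B, F) = {R_η(f) ∩ U(B,f) : f ∈ F}`, the η-robust mistake sets on `B`. -/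
def MFam (μ : X → ℝ) (N : X → Finset X) (η : ℝ) (y : X → Y)
    (B : Finset X) (F : Set (X → Y)) : Set (Finset X) :=
  {A | ∃ f ∈ F, A = Rset μ N η f ∩ (B.filter fun x => f x ≠ y x)}

/-- `M'_η(B, F) = {R_η(f) ∩ (B \ U(B,f)) : f ∈ F}`, the η-robust non-mistake sets on `B`. -/
def MFam' (μ : X → ℝ) (N : X → Finset X) (η : ℝ) (y : X → Y)
    (B : Finset X) (F : Set (X → Y)) : Set (Finset X) :=
  {A | ∃ f ∈ F, A = Rset μ N η f ∩ (B.filter fun x => f x = y x)}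

/-! On a robust point of the bad set, `f` either corrects the pseudolabel, and so disagrees with
`ỹ`, or keeps a mistake. By robustness the set `V = {f ≠ i}` carries a `1 - η` fraction of the edge
weight at the robust bad mistakes `U`. If `P(U | S_i^bad) > q`, expansion therefore makes
`V ∩ S_i^good` large; `f` disagrees with `ỹ` or fails to be robust on
`(V ∩ S_i^good) ∪ (S_i^bad \ U)`, whose mass then exceeds the assumed bound.
Hence `P(U | S_i) ≤ q α_i`, and the error bound follows from a triangle inequality for
disagreement with defect `2 P(f ≠ y ≠ ỹ)`, where `{f ≠ y ≠ ỹ}` is contained in `U` up to the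
non-robust points. -/

section ConditionalProbability

variable {Ω : Type*} {μ : Ω → ℝ}

theorem Pw_nonneg (hμ : ∀ x, 0 ≤ μ x) (A : Finset Ω) : 0 ≤ Pw μ A :=
  sum_nonneg fun x _ => hμ x

theorem Pw_mono (hμ : ∀ x, 0 ≤ μ x) {A A' : Finset Ω} (h : A ⊆ A') : Pw μ A ≤ Pw μ A' :=
  sum_le_sum_of_subset_of_nonneg h fun x _ _ => hμ x

variable [DecidableEq Ω]

theorem Pw_union_add_inter (A A' : Finset Ω) :
    Pw μ (A ∪ A') + Pw μ (A ∩ A') = Pw μ A + Pw μ A' :=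
  sum_union_inter

theorem Pw_union_le (hμ : ∀ x, 0 ≤ μ x) (A A' : Finset Ω) :
    Pw μ (A ∪ A') ≤ Pw μ A + Pw μ A' := by
  linarith [Pw_union_add_inter (μ := μ) A A', Pw_nonneg hμ (A ∩ A')]

theorem cPw_nonneg (hμ : ∀ x, 0 ≤ μ x) (A B : Finset Ω) : 0 ≤ cPw μ A B :=
  div_nonneg (Pw_nonneg hμ _) (Pw_nonneg hμ _)

theorem cPw_mono (hμ : ∀ x, 0 ≤ μ x) {A A' B : Finset Ω} (h : A ∩ B ⊆ A') :
    cPw μ A B ≤ cPw μ A' B :=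
  div_le_div_of_nonneg_right (Pw_mono hμ (subset_inter h inter_subset_right)) (Pw_nonneg hμ B)

theorem cPw_union_add_inter (A A' B : Finset Ω) :
    cPw μ (A ∪ A') B + cPw μ (A ∩ A') B = cPw μ A B + cPw μ A' B := by
  simp only [cPw, ← add_div]
  rw [union_inter_distrib_right, inter_inter_distrib_right, Pw_union_add_inter]

theorem cPw_union_le (hμ : ∀ x, 0 ≤ μ x) (A A' B : Finset Ω) :
    cPw μ (A ∪ A') B ≤ cPw μ A B + cPw μ A' B := by
  linarith [cPw_union_add_inter (μ := μ) A A' B, cPw_nonneg hμ (A ∩ A') B]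

theorem cPw_union_of_disjoint {A A' : Finset Ω} (h : Disjoint A A') (B : Finset Ω) :
    cPw μ (A ∪ A') B = cPw μ A B + cPw μ A' B := by
  rw [← cPw_union_add_inter, disjoint_iff_inter_eq_empty.mp h]
  simp [cPw, Pw]

theorem cPw_self {B : Finset Ω} (hB : Pw μ B ≠ 0) : cPw μ B B = 1 := by
  rw [cPw, inter_self, div_self hB]

theorem cPw_pos_of_subset (hμ : ∀ x, 0 ≤ μ x) {B S : Finset Ω} (hBS : B ⊆ S) (hB : 0 < Pw μ B) :
    0 < cPw μ B S := by
  rw [cPw, inter_eq_left.mpr hBS]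
  exact div_pos hB (hB.trans_le (Pw_mono hμ hBS))

theorem cPw_mul_cPw {B S : Finset Ω} (hBS : B ⊆ S) (hB : Pw μ B ≠ 0) (A : Finset Ω) :
    cPw μ A B * cPw μ B S = cPw μ (A ∩ B) S := by
  rw [cPw, cPw, cPw, inter_assoc, inter_eq_left.mpr hBS, div_mul_div_cancel₀ hB]

end ConditionalProbability

section Disagreement

variable {Ω Z : Type*} [Fintype Ω] [DecidableEq Ω] {μ : Ω → ℝ}

theorem errP_comp_of_injective {W : Type*} {φ : Z → W} (hφ : Function.Injective φ)
    (f g : Ω → Z) (U : Finset Ω) : errP μ (φ ∘ f) (φ ∘ g) U = errP μ f g U := by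
  simp only [errP, Function.comp_apply, hφ.ne_iff]

/- The union of `{f ≠ g}` and `{g ≠ h}` is covered by `{f ≠ h}` and their intersection. -/
theorem errP_add_errP_le (hμ : ∀ x, 0 ≤ μ x) (f g h : Ω → Z) (U : Finset Ω) :
    errP μ f g U + errP μ g h U ≤
      errP μ f h U + 2 * cPw μ (univ.filter fun x => f x ≠ g x ∧ g x ≠ h x) U := by
  have hcover : (univ.filter fun x => f x ≠ g x) ∪ (univ.filter fun x => g x ≠ h x) ⊆
      (univ.filter fun x => f x ≠ h x) ∪ (univ.filter fun x => f x ≠ g x ∧ g x ≠ h x) := by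
    grind
  have hunion := (cPw_mono hμ (B := U) (inter_subset_left.trans hcover)).trans
    (cPw_union_le hμ _ _ _)
  have hadd := cPw_union_add_inter (μ := μ) (univ.filter fun x => f x ≠ g x)
    (univ.filter fun x => g x ≠ h x) U
  rw [← filter_and] at hadd
  unfold errP
  linarith

end Disagreement

section EdgeWeight

variable {Ω : Type*} [DecidableEq Ω] {μ : Ω → ℝ} {N : Ω → Finset Ω}

theorem wS_eq_sum_mul_Pw (μ : Ω → ℝ) (N : Ω → Finset Ω) (V U : Finset Ω) :
    wS μ N V U = ∑ x ∈ U, μ x * Pw μ (V ∩ N x) := by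
  rw [wS, sum_comm]
  refine sum_congr rfl fun x _ => ?_
  rw [Pw, ← filter_mem_eq_inter, sum_filter, mul_sum]
  refine sum_congr rfl fun x' _ => ?_
  rw [wE, mul_ite, mul_ite, mul_one, mul_zero, mul_zero, mul_comm]

theorem robNbhdSize_le_cPw (hμ : ∀ x, 0 ≤ μ x) {η : ℝ} {U V : Finset Ω} (A : Finset Ω)
    (h : (1 - η) * wS μ N (nbhd N U) U ≤ wS μ N V U) :
    robNbhdSize μ N η U A ≤ cPw μ V A := by
  refine csInf_le ⟨0, ?_⟩ ⟨V, h, rfl⟩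
  rintro _ ⟨W, -, rfl⟩
  exact cPw_nonneg hμ W A

end EdgeWeight

section Robustness

variable {μ : X → ℝ} {N : X → Finset X} {η : ℝ}

theorem one_sub_mul_Pw_le_of_mem_Rset (hμ : ∀ x, 0 ≤ μ x) {f : X → Y} {i : Y} {x : X}
    (hN : 0 < Pw μ (N x)) (hx : x ∈ Rset μ N η f) (hfx : f x ≠ i) :
    (1 - η) * Pw μ (N x) ≤ Pw μ ((univ.filter fun x' => f x' ≠ i) ∩ N x) := by
  have hrob : Pw μ ((univ.filter fun x' => f x' ≠ f x) ∩ N x) ≤ η * Pw μ (N x) :=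
    (div_le_iff₀ hN).mp (mem_filter.mp hx).2
  have hcover : N x ⊆ ((univ.filter fun x' => f x' ≠ f x) ∩ N x) ∪
      ((univ.filter fun x' => f x' ≠ i) ∩ N x) := by
    grind
  linarith [(Pw_mono hμ hcover).trans (Pw_union_le hμ _ _)]

theorem one_sub_mul_wS_nbhd_le (hμ : ∀ x, 0 ≤ μ x) (hNpos : ∀ x, 0 < Pw μ (N x)) {f : X → Y}
    {i : Y} {U : Finset X} (hUR : U ⊆ Rset μ N η f) (hUi : ∀ x ∈ U, f x ≠ i) :
    (1 - η) * wS μ N (nbhd N U) U ≤ wS μ N (univ.filter fun x => f x ≠ i) U := by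
  rw [wS_eq_sum_mul_Pw, wS_eq_sum_mul_Pw, mul_sum]
  refine sum_le_sum fun x hx => ?_
  rw [inter_eq_right.mpr (show N x ⊆ nbhd N U from subset_biUnion_of_mem N hx), mul_left_comm]
  exact mul_le_mul_of_nonneg_left
    (one_sub_mul_Pw_le_of_mem_Rset hμ (hNpos x) (hUR hx) (hUi x hx)) (hμ x)

/-- The `η`-robust mistake set `R_η(f) ∩ U(B, f)` of a single classifier `f` on `B`; these sets
are the members of `MFam`. -/
def robustMistakes (μ : X → ℝ) (N : X → Finset X) (η : ℝ) (y : X → Y) (B : Finset X)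
    (f : X → Y) : Finset X :=
  Rset μ N η f ∩ B.filter fun x => f x ≠ y x

theorem robustMistakes_subset (μ : X → ℝ) (N : X → Finset X) (η : ℝ) (y : X → Y)
    (B : Finset X) (f : X → Y) : robustMistakes μ N η y B f ⊆ B :=
  inter_subset_right.trans (filter_subset _ _)

theorem RobustExpansion.mul_cPw_robustMistakes_lt {c q : ℝ} {y f : X → Y} {F : Set (X → Y)}
    {i : Y} {A B : Finset X} (hexp : RobustExpansion μ N c q η (MFam μ N η y B F) A B)
    (hμ : ∀ x, 0 ≤ μ x) (hNpos : ∀ x, 0 < Pw μ (N x)) (hf : f ∈ F) (hB : ∀ x ∈ B, y x = i)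
    (hq : q < cPw μ (robustMistakes μ N η y B f) B) :
    c * cPw μ (robustMistakes μ N η y B f) B < cPw μ (univ.filter fun x => f x ≠ i) A := by
  have hne : ∀ x ∈ robustMistakes μ N η y B f, f x ≠ i := by
    intro x hx
    obtain ⟨hxB, hfx⟩ := mem_filter.mp (mem_inter.mp hx).2
    exact hB x hxB ▸ hfx
  exact (hexp _ ⟨f, hf, rfl⟩ hq).trans_le
    (robNbhdSize_le_cPw hμ A (one_sub_mul_wS_nbhd_le hμ hNpos inter_subset_left hne))

end Robustness

theorem cPw_le_mul_of_expansion {Ω : Type*} [DecidableEq Ω] {μ : Ω → ℝ} {G B S U V : Finset Ω}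
    {c q p : ℝ} (hμ : ∀ x, 0 ≤ μ x) (hG : 0 < Pw μ G) (hB : 0 < Pw μ B)
    (hGB : Disjoint G B) (hS : G ∪ B = S) (hUB : U ⊆ B)
    (hc : cPw μ B S / (1 - cPw μ B S) < c)
    (hexp : q < cPw μ U B → c * cPw μ U B < cPw μ V G)
    (hmass : cPw μ (V ∩ G) S + cPw μ B S ≤ p + cPw μ U S)
    (hp : p ≤ cPw μ B S * (1 + q * (c * (1 - cPw μ B S) / cPw μ B S - 1))) :
    cPw μ U S ≤ q * cPw μ B S := by
  have hGS : G ⊆ S := hS ▸ subset_union_left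
  have hBS : B ⊆ S := hS ▸ subset_union_right
  have hα : 0 < cPw μ B S := cPw_pos_of_subset hμ hBS hB
  have hgood : cPw μ G S = 1 - cPw μ B S := by
    rw [eq_sub_iff_add_eq, ← cPw_union_of_disjoint hGB, hS,
      cPw_self (hG.trans_le (Pw_mono hμ hGS)).ne']
  have hα' : 0 < 1 - cPw μ B S := hgood ▸ cPw_pos_of_subset hμ hGS hG
  have hU : cPw μ U B * cPw μ B S = cPw μ U S := by
    rw [cPw_mul_cPw hBS hB.ne', inter_eq_left.mpr hUB]
  have hV : cPw μ V G * (1 - cPw μ B S) = cPw μ (V ∩ G) S := by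
    rw [← hgood, cPw_mul_cPw hGS hG.ne']
  have hgain : 0 < c * (1 - cPw μ B S) / cPw μ B S - 1 := by
    rw [sub_pos, one_lt_div hα]
    exact (div_lt_iff₀ hα').mp hc
  by_contra! hqU
  have hq : q < cPw μ U B := lt_of_mul_lt_mul_right (hU ▸ hqU) hα.le
  refine hp.not_gt ?_
  calc cPw μ B S * (1 + q * (c * (1 - cPw μ B S) / cPw μ B S - 1))
      < cPw μ B S * (1 + cPw μ U B * (c * (1 - cPw μ B S) / cPw μ B S - 1)) := by gcongr
    _ = c * cPw μ U B * (1 - cPw μ B S) + cPw μ B S - cPw μ U B * cPw μ B S := by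
        field_simp
        ring
    _ < cPw μ V G * (1 - cPw μ B S) + cPw μ B S - cPw μ U B * cPw μ B S := by
        gcongr
        exact hexp hq
    _ ≤ p := by
        rw [hU, hV]
        linarith

section Pseudolabels

variable {μ : X → ℝ} {N : X → Finset X} {η : ℝ} {y f : X → Y} {yt : X → Option Y} {i : Y}

theorem mem_SiBad {x : X} :
    x ∈ SiBad y yt i ↔ yt x ≠ none ∧ y x = i ∧ yt x ≠ some (y x) := by
  simp only [SiBad, SiSet, SiGood, mem_sdiff, mem_filter, mem_univ, true_and]
  tauto

theorem SiGood_union_SiBad (y : X → Y) (yt : X → Option Y) (i : Y) :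
    SiGood y yt i ∪ SiBad y yt i = SiSet y yt i := by
  refine union_sdiff_of_subset fun x hx => ?_
  simp only [SiGood, SiSet, mem_filter, mem_univ, true_and] at hx ⊢
  grind

theorem alphaW_eq_errP (μ : X → ℝ) (y : X → Y) (yt : X → Option Y) (i : Y) :
    alphaW μ y yt i = errP μ (some ∘ y) yt (SiSet y yt i) := by
  rw [alphaW, errP, cPw, cPw]
  congr 2
  ext x
  simp only [mem_SiBad, SiSet, mem_inter, mem_filter, mem_univ, true_and, Function.comp_apply]
  grind

/- On a good point `f x ≠ i` means `f x ≠ ỹ x`; a bad point outside the robust mistakes is either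
not robust or has `f x = y x ≠ ỹ x`. -/
theorem cPw_ne_inter_SiGood_add_alphaW_le (hμ : ∀ x, 0 ≤ μ x) :
    cPw μ ((univ.filter fun x => f x ≠ i) ∩ SiGood y yt i) (SiSet y yt i) + alphaW μ y yt i ≤
      cPw μ (univ.filter fun x => some (f x) ≠ yt x ∨ x ∉ Rset μ N η f) (SiSet y yt i) +
        cPw μ (robustMistakes μ N η y (SiBad y yt i) f) (SiSet y yt i) := by
  have hdisj : Disjoint ((univ.filter fun x => f x ≠ i) ∩ SiGood y yt i) (SiBad y yt i) :=
    disjoint_sdiff.mono_left inter_subset_right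
  rw [alphaW, ← cPw_union_of_disjoint hdisj]
  refine (cPw_mono hμ fun x hx => ?_).trans (cPw_union_le hμ _ _ _)
  simp only [SiGood, robustMistakes, mem_union, mem_inter, mem_filter, mem_univ, true_and,
    mem_SiBad] at hx ⊢
  grind

theorem errP_add_alphaW_le (hμ : ∀ x, 0 ≤ μ x) :
    errP μ f y (SiSet y yt i) + alphaW μ y yt i ≤
      errP μ (some ∘ f) yt (SiSet y yt i) +
        2 * (cPw μ (robustMistakes μ N η y (SiBad y yt i) f) (SiSet y yt i) +
          cPw μ (univ \ Rset μ N η f) (SiSet y yt i)) := by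
  rw [alphaW_eq_errP, ← errP_comp_of_injective (Option.some_injective Y)]
  refine (errP_add_errP_le hμ _ _ _ _).trans ?_
  gcongr
  refine (cPw_mono hμ fun x hx => ?_).trans (cPw_union_le hμ _ _ _)
  simp only [SiSet, robustMistakes, mem_union, mem_inter, mem_filter, mem_univ, true_and,
    mem_sdiff, mem_SiBad, Function.comp_apply] at hx ⊢
  grind

end Pseudolabels

theorem wei_pseudolabel_correction_avg_robust_general
    (μ : X → ℝ) (N : X → Finset X) (y : X → Y) (yt : X → Option Y)
    (F : Set (X → Y)) (i : Y) (f : X → Y) (η c q : ℝ)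
    (hμ : ∀ x, 0 ≤ μ x)
    (hNpos : ∀ x, 0 < Pw μ (N x))
    (hSg : 0 < Pw μ (SiGood y yt i))
    (hSb : 0 < Pw μ (SiBad y yt i))
    (hc : c > alphaW μ y yt i / (1 - alphaW μ y yt i))
    (hf : f ∈ F)
    (hexp : RobustExpansion μ N c q η (MFam μ N η y (SiBad y yt i) F)
      (SiGood y yt i) (SiBad y yt i))
    (hcond : cPw μ (univ.filter fun x => some (f x) ≠ yt x ∨ x ∉ Rset μ N η f)
        (SiSet y yt i)
      ≤ alphaW μ y yt i *
          (1 + q * (c * (1 - alphaW μ y yt i) / alphaW μ y yt i - 1))) :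
    errP μ f y (SiSet y yt i) ≤
      2 * (q * alphaW μ y yt i + cPw μ (univ \ Rset μ N η f) (SiSet y yt i))
        + errP μ (fun x => some (f x)) yt (SiSet y yt i)
        - alphaW μ y yt i := by
  have hbad : ∀ x ∈ SiBad y yt i, y x = i := fun x hx => (mem_SiBad.mp hx).2.1
  have hmistakes : cPw μ (robustMistakes μ N η y (SiBad y yt i) f) (SiSet y yt i) ≤
      q * alphaW μ y yt i :=
    cPw_le_mul_of_expansion hμ hSg hSb disjoint_sdiff (SiGood_union_SiBad y yt i)
      (robustMistakes_subset μ N η y _ f) hc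
      (hexp.mul_cPw_robustMistakes_lt hμ hNpos hf hbad)
      (cPw_ne_inter_SiGood_add_alphaW_le hμ) hcond
  have herr : errP μ f y (SiSet y yt i) + alphaW μ y yt i ≤
      errP μ (fun x => some (f x)) yt (SiSet y yt i) +
        2 * (cPw μ (robustMistakes μ N η y (SiBad y yt i) f) (SiSet y yt i) +
          cPw μ (univ \ Rset μ N η f) (SiSet y yt i)) :=
    errP_add_alphaW_le hμ
  linarith

/-- Pseudolabel correction via bad-to-good expansion,
average-case-robust generalization of Wei et al.'s bound,
Theorem `thm:wei-plc-avgrobust`. -/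
theorem wei_pseudolabel_correction_avg_robust
    (μ : X → ℝ) (N : X → Finset X) (y : X → Y) (yt : X → Option Y)
    (F : Set (X → Y)) (i : Y) (f : X → Y) (η c q : ℝ)
    (hμ : ∀ x, 0 ≤ μ x) (hμ1 : ∑ x, μ x = 1)
    (hNsym : ∀ x x', x ∈ N x' ↔ x' ∈ N x)
    (hNpos : ∀ x, 0 < Pw μ (N x))
    (hSi : 0 < Pw μ (SiSet y yt i))
    (hSg : 0 < Pw μ (SiGood y yt i))
    (hSb : 0 < Pw μ (SiBad y yt i))
    (hα0 : 0 < alphaW μ y yt i) (hα : alphaW μ y yt i < 1 / 2)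
    (hη : 0 ≤ η) (hq : 0 ≤ q)
    (hc : c > alphaW μ y yt i / (1 - alphaW μ y yt i))
    (hf : f ∈ F)
    (hexp : RobustExpansion μ N c q η (MFam μ N η y (SiBad y yt i) F)
      (SiGood y yt i) (SiBad y yt i))
    (hcond : cPw μ (univ.filter fun x => some (f x) ≠ yt x ∨ x ∉ Rset μ N η f)
        (SiSet y yt i)
      ≤ alphaW μ y yt i *
          (1 + q * (c * (1 - alphaW μ y yt i) / alphaW μ y yt i - 1))) :
    errP μ f y (SiSet y yt i) ≤
      2 * (q * alphaW μ y yt i + cPw μ (univ \ Rset μ N η f) (SiSet y yt i))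
        + errP μ (fun x => some (f x)) yt (SiSet y yt i)
        - alphaW μ y yt i := by
  exact wei_pseudolabel_correction_avg_robust_general μ N y yt F i f η c q hμ hNpos hSg hSb hc hf
    hexp hcond
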